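/- Let (E,T,S,e) be a conditionally ergodic conditional expectation preserving system with T strictly positive and S surjective, and assume every upward directed subset D of E₊ for which {Tf : f ∈ D} is order bounded in E has a supremum in E. Then for every integer n ≥ 1 and every component p of e there exists a component q of P_{Tp}e such that q, Sq, …, S^{n-1}q are pairwise disjoint and T(⋁_{j=0}^{n-1} S^j q) ≥ (P_{Tp}e − (n−1)·Tp)⁺. -/

import Mathlib

noncomputable section

open Function Set

variable {E : Type*}

/-- `e` is a weak order unit: `e > 0` and `e ⊓ |x| = 0` implies `x = 0`. -/
def WeakOrderUnit [Lattice E] [AddCommGroup E] (e : E) : Prop :=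
  0 < e ∧ ∀ x : E, e ⊓ (x ⊔ -x) = 0 → x = 0

/-- `p` is a component of `q ∈ E₊`: `0 ≤ p ≤ q` and `(q - p) ⊓ p = 0`. -/
def IsComponent [Lattice E] [AddCommGroup E] (q p : E) : Prop :=
  0 ≤ p ∧ p ≤ q ∧ (q - p) ⊓ p = 0

/-- `partialSup f n = ⋁_{j < n} f j`, with the empty supremum equal to `0`. -/
def partialSup [Lattice E] [Zero E] (f : ℕ → E) : ℕ → E
  | 0 => 0
  | n + 1 => partialSup f n ⊔ f n

/-- The band projection of `e` onto the band generated by `g`: `P_g e = ⨆_{m ∈ ℕ} (e ⊓ m•g)`. -/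
def bandProjApp [ConditionallyCompleteLattice E] [AddCommGroup E] (g e : E) : E :=
  ⨆ m : ℕ, e ⊓ m • g

/-- `qComp Sinv e p k = p ⊓ S⁻ᵏp ⊓ (e - ⋁_{j=1}^{k-1} S⁻ʲp)` (empty supremum is `0`). -/
def qComp [Lattice E] [AddCommGroup E] (Sinv : E → E) (e p : E) (k : ℕ) : E :=
  p ⊓ Sinv^[k] p ⊓ (e - partialSup (fun j => Sinv^[j + 1] p) (k - 1))

/-- `(E,T,S,e)` is a conditional expectation preserving system: `E` is a Dedekind complete
Riesz space (typeclass assumptions), `e` is a weak order unit, `T` is a strictly positive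
conditional expectation operator with `Te = e`, and `S` is an order-continuous Riesz
homomorphism with `Se = e` and `TS = T`. -/
structure IsCEPS [ConditionallyCompleteLattice E] [AddCommGroup E] [Module ℝ E]
    (T S : E →ₗ[ℝ] E) (e : E) : Prop where
  unit : WeakOrderUnit e
  T_pos : ∀ f : E, 0 ≤ f → 0 ≤ T f
  T_strictPos : ∀ f : E, 0 ≤ f → T f = 0 → f = 0
  T_proj : ∀ f : E, T (T f) = T f
  T_ordCont : ∀ D : Set E, D.Nonempty → DirectedOn (· ≥ ·) D → IsGLB D 0 →
    IsGLB ((⇑T) '' D) 0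
  T_range_sublattice : ∀ x ∈ Set.range T, ∀ y ∈ Set.range T, x ⊔ y ∈ Set.range T
  T_range_dedekind : ∀ D : Set E, D ⊆ Set.range T → D.Nonempty →
    (∃ b ∈ Set.range T, ∀ x ∈ D, x ≤ b) →
    ∃ s ∈ Set.range T, (∀ x ∈ D, x ≤ s) ∧ ∀ b ∈ Set.range T, (∀ x ∈ D, x ≤ b) → s ≤ b
  T_weakUnit : ∀ u : E, WeakOrderUnit u → WeakOrderUnit (T u)
  Te : T e = e
  S_hom : ∀ x y : E, S (x ⊔ y) = S x ⊔ S y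
  S_ordCont : ∀ D : Set E, D.Nonempty → DirectedOn (· ≥ ·) D → IsGLB D 0 →
    IsGLB ((⇑S) '' D) 0
  Se : S e = e
  TS : ∀ f : E, T (S f) = T f

/-- `E` is `T`-universally complete: every upward directed subset `D` of `E₊` for which
`T '' D` is order bounded in `E` has a supremum in `E`. -/
def TUnivComplete [ConditionallyCompleteLattice E] [AddCommGroup E] [Module ℝ E]
    (T : E →ₗ[ℝ] E) : Prop :=
  ∀ D : Set E, D.Nonempty → D ⊆ {x : E | 0 ≤ x} → DirectedOn (· ≤ ·) D →
    BddAbove ((⇑T) '' D) → BddBelow ((⇑T) '' D) → ∃ s : E, IsLUB D s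

/-- `(S, v)` is aperiodic (with `Sinv` the inverse of `S`): for every `N ∈ ℕ` and every
nonzero component `c` of `v` there exist `k ≥ N` and a component `u` of `c` with
`q(u,k) ≠ 0`. -/
def IsAperiodic [Lattice E] [AddCommGroup E] (Sinv : E → E) (e v : E) : Prop :=
  ∀ N : ℕ, ∀ c : E, IsComponent v c → c ≠ 0 →
    ∃ k : ℕ, N ≤ k ∧ ∃ u : E, IsComponent c u ∧ qComp Sinv e u k ≠ 0

/-- `(S, e)` is periodic (with `Sinv` the inverse of `S`): there is `N ∈ ℕ` such that
`q(c,k) = 0` for all `k ≥ N` and all components `c` of `e` with `0 ≠ c ≠ e`. -/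
def IsPeriodic [Lattice E] [AddCommGroup E] (Sinv : E → E) (e : E) : Prop :=
  ∃ N : ℕ, ∀ c : E, IsComponent e c → c ≠ 0 → c ≠ e → ∀ k : ℕ, N ≤ k → qComp Sinv e c k = 0

/-!
Under conditional ergodicity `P_{Tp} e` is the supremum `v` of the iterates `Sᵏ p`. Split `v` into
the levels `L k` of the Kakutani skyscraper over `p`: the part of `Sᵏ p` not covered by
`p, …, Sᵏ⁻¹ p`. Pushing a level forward gives the next one up to an error below `p`:
`L (k + 1) ≤ S (L k) ≤ L (k + 1) + p`. Group the levels into blocks of `n + 1` and pull the top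
level of each block back by `S⁻ⁿ`; the supremum `q` of these is the base. Its first `n + 1` iterates
lie in levels with distinct residues modulo `n + 1`, hence are disjoint, and they cover `v` up to
`S⁻¹ p + ⋯ + S⁻ⁿ p`, whose conditional expectation is `n • T p`.
-/

section OrderIsomorphisms

lemma isLUB_range_map {F α β : Type*} [Preorder α] [Preorder β] [EquivLike F α β]
    [OrderIsoClass F α β] (S : F) {ι : Sort*} {f : ι → α} {s : α} (h : IsLUB (range f) s) :
    IsLUB (range fun k => S (f k)) (S s) := by
  have himage := (OrderIsoClass.toOrderIso S).isLUB_image'.2 h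
  rwa [← range_comp] at himage

lemma isLUB_range_iterate {F : Type*} [Preorder E] [EquivLike F E E] [OrderIsoClass F E E] (S : F)
    {ι : Sort*} {f : ι → E} {s : E} (h : IsLUB (range f) s) (i : ℕ) :
    IsLUB (range fun k => S^[i] (f k)) (S^[i] s) := by
  induction i with
  | zero => exact h
  | succ i ih => simpa only [iterate_succ_apply'] using isLUB_range_map S ih

lemma symm_apply_eq_self [Preorder E] [Add E] {S : E ≃+o E} {e : E} (hSe : S e = e) :
    S.symm e = e :=
  S.injective ((S.apply_symm_apply e).trans hSe.symm)

end OrderIsomorphisms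

section Disjointness

lemma inf_eq_zero_of_le_of_le [SemilatticeInf E] [Zero E] {a b c d : E} (ha : 0 ≤ a) (hb : 0 ≤ b)
    (hac : a ≤ c) (hbd : b ≤ d) (h : c ⊓ d = 0) : a ⊓ b = 0 :=
  le_antisymm (h ▸ inf_le_inf hac hbd) (le_inf ha hb)

variable [Lattice E] [AddCommGroup E] [IsOrderedAddMonoid E] {a b x s : E}

lemma sup_eq_add_of_inf_eq_zero (h : a ⊓ b = 0) : a ⊔ b = a + b := by
  simpa [h] using inf_add_sup a b

lemma sup_le_add_of_nonneg (ha : 0 ≤ a) (hb : 0 ≤ b) : a ⊔ b ≤ a + b :=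
  sup_le (le_add_of_nonneg_right hb) (le_add_of_nonneg_left ha)

lemma inf_add_eq_zero (ha : x ⊓ a = 0) (hb : x ⊓ b = 0) : x ⊓ (a + b) = 0 := by
  have hx : 0 ≤ x := ha ▸ inf_le_left
  have ha₀ : 0 ≤ a := ha ▸ inf_le_right
  have hb₀ : 0 ≤ b := hb ▸ inf_le_right
  refine le_antisymm ?_ (le_inf hx (add_nonneg ha₀ hb₀))
  calc x ⊓ (a + b) ≤ x ⊓ a + x ⊓ b := by
        rw [add_inf, inf_add x a b]
        exact le_inf (inf_le_left.trans (le_add_of_nonneg_left ha.ge))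
          (le_inf (inf_le_left.trans (le_add_of_nonneg_right hb₀)) inf_le_right)
    _ = 0 := by rw [ha, hb, add_zero]

lemma inf_nsmul_eq_zero (h : x ⊓ a = 0) (m : ℕ) : x ⊓ m • a = 0 := by
  induction m with
  | zero => simpa using h ▸ inf_le_left
  | succ m ih => rw [succ_nsmul]; exact inf_add_eq_zero ih h

lemma inf_sup_eq_zero (ha : x ⊓ a = 0) (hb : x ⊓ b = 0) : x ⊓ (a ⊔ b) = 0 := by
  have ha₀ : 0 ≤ a := ha ▸ inf_le_right
  exact inf_eq_zero_of_le_of_le (ha ▸ inf_le_left) (ha₀.trans le_sup_left) le_rfl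
    (sup_le_add_of_nonneg ha₀ (hb ▸ inf_le_right)) (inf_add_eq_zero ha hb)

lemma inf_eq_zero_of_isLUB {ι : Sort*} [Nonempty ι] {f : ι → E} (hs : IsLUB (range f) s)
    (h : ∀ k, x ⊓ f k = 0) : x ⊓ s = 0 := by
  obtain ⟨k₀⟩ := ‹Nonempty ι›
  have hx : 0 ≤ x := h k₀ ▸ inf_le_left
  have hs₀ : 0 ≤ s := (h k₀ ▸ inf_le_right : 0 ≤ f k₀).trans (hs.1 ⟨k₀, rfl⟩)
  have hadd : x + s ≤ x ⊔ s := by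
    refine le_sub_iff_add_le'.1 (hs.2 ?_)
    rintro _ ⟨k, rfl⟩
    rw [le_sub_iff_add_le', ← sup_eq_add_of_inf_eq_zero (h k)]
    exact sup_le_sup_left (hs.1 ⟨k, rfl⟩) x
  rw [← inf_add_sup x s] at hadd
  exact le_antisymm (by simpa using hadd) (le_inf hx hs₀)

end Disjointness

section Components

variable [AddCommGroup E]

lemma IsComponent.map [Lattice E] {e p : E} (S : E ≃+o E) (hp : IsComponent e p) :
    IsComponent (S e) (S p) := by
  obtain ⟨hp₀, hpe, hdisj⟩ := hp
  exact ⟨map_zero S ▸ OrderHomClass.mono S hp₀, OrderHomClass.mono S hpe, by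
    rw [← map_sub, ← map_inf, hdisj, map_zero]⟩

lemma IsComponent.iterate [Lattice E] {e p : E} {S : E ≃+o E} (hSe : S e = e)
    (hp : IsComponent e p) (k : ℕ) : IsComponent e (S^[k] p) := by
  induction k with
  | zero => exact hp
  | succ k ih => rw [iterate_succ_apply', ← hSe]; exact ih.map S

lemma IsComponent.isLUB_iSup [ConditionallyCompleteLattice E] {ι : Sort*} [Nonempty ι] {e : E}
    {f : ι → E} (hf : ∀ k, IsComponent e (f k)) : IsLUB (range f) (⨆ k, f k) :=
  isLUB_ciSup ⟨e, forall_mem_range.2 fun k => (hf k).2.1⟩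

section Lattice

variable [Lattice E] [IsOrderedAddMonoid E] {e a b s : E}

lemma IsComponent.sup (ha : IsComponent e a) (hb : IsComponent e b) : IsComponent e (a ⊔ b) := by
  have hle : a ⊔ b ≤ e := sup_le ha.2.1 hb.2.1
  have hcompl : 0 ≤ e - a ⊔ b := sub_nonneg.2 hle
  exact ⟨ha.1.trans le_sup_left, hle, inf_sup_eq_zero
    (inf_eq_zero_of_le_of_le hcompl ha.1 (sub_le_sub_left le_sup_left e) le_rfl ha.2.2)
    (inf_eq_zero_of_le_of_le hcompl hb.1 (sub_le_sub_left le_sup_right e) le_rfl hb.2.2)⟩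

lemma IsComponent.of_isLUB {ι : Sort*} [Nonempty ι] {f : ι → E} (hs : IsLUB (range f) s)
    (hf : ∀ k, IsComponent e (f k)) : IsComponent e s := by
  obtain ⟨k₀⟩ := ‹Nonempty ι›
  have hse : s ≤ e := hs.2 (forall_mem_range.2 fun k => (hf k).2.1)
  exact ⟨(hf k₀).1.trans (hs.1 ⟨k₀, rfl⟩), hse, inf_eq_zero_of_isLUB hs fun k =>
    inf_eq_zero_of_le_of_le (sub_nonneg.2 hse) (hf k).1 (sub_le_sub_left (hs.1 ⟨k, rfl⟩) e)
      le_rfl (hf k).2.2⟩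

lemma IsComponent.sub (ha : IsComponent e a) (hb : IsComponent e b) (hab : a ≤ b) :
    IsComponent e (b - a) := by
  have hdiff : 0 ≤ b - a := sub_nonneg.2 hab
  have hle : b - a ≤ b := sub_le_self _ ha.1
  refine ⟨hdiff, hle.trans hb.2.1, ?_⟩
  rw [inf_comm, show e - (b - a) = (e - b) + a by abel]
  refine inf_add_eq_zero ?_ ?_
  · rw [inf_comm]
    exact inf_eq_zero_of_le_of_le (sub_nonneg.2 hb.2.1) hdiff le_rfl hle hb.2.2
  · exact inf_eq_zero_of_le_of_le hdiff ha.1 (sub_le_sub_right hb.2.1 a) le_rfl ha.2.2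

lemma IsComponent.of_le_of_le (ha : IsComponent e a) (hab : a ≤ b) (hbe : b ≤ e) :
    IsComponent b a :=
  ⟨ha.1, hab, inf_eq_zero_of_le_of_le (sub_nonneg.2 hab) ha.1 (sub_le_sub_right hbe a) le_rfl
    ha.2.2⟩

end Lattice

end Components

section BandProjection

variable [ConditionallyCompleteLattice E] [AddCommGroup E]

lemma isLUB_bandProjApp (g e : E) :
    IsLUB (range fun m : ℕ => e ⊓ m • g) (bandProjApp g e) :=
  isLUB_ciSup ⟨e, forall_mem_range.2 fun _ => inf_le_left⟩

lemma bandProjApp_le (g e : E) : bandProjApp g e ≤ e :=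
  ciSup_le fun _ => inf_le_left

lemma bandProjApp_nonneg (g : E) {e : E} (he : 0 ≤ e) : 0 ≤ bandProjApp g e :=
  (le_inf he (zero_nsmul g).ge).trans ((isLUB_bandProjApp g e).1 ⟨0, rfl⟩)

lemma map_bandProjApp (S : E ≃+o E) (g e : E) :
    S (bandProjApp g e) = bandProjApp (S g) (S e) := by
  have h := isLUB_range_map S (isLUB_bandProjApp g e)
  simp only [map_inf, map_nsmul] at h
  exact h.unique (isLUB_bandProjApp (S g) (S e))

variable [IsOrderedAddMonoid E] {e g v : E}

lemma sub_bandProjApp_inf_eq_zero (hg : 0 ≤ g) : (e - bandProjApp g e) ⊓ g = 0 := by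
  refine le_antisymm ?_ (le_inf (sub_nonneg.2 (bandProjApp_le g e)) hg)
  have hlub := isLUB_bandProjApp g e
  suffices bandProjApp g e ≤ bandProjApp g e - (e - bandProjApp g e) ⊓ g by simpa using this
  refine ciSup_le fun m => le_sub_iff_add_le.2 ?_
  refine (le_inf ?_ ?_).trans (hlub.1 ⟨m + 1, rfl⟩)
  · calc e ⊓ m • g + (e - bandProjApp g e) ⊓ g ≤ bandProjApp g e + (e - bandProjApp g e) :=
          add_le_add (hlub.1 ⟨m, rfl⟩) inf_le_left
      _ = e := add_sub_cancel _ _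
  · rw [succ_nsmul]
    exact add_le_add inf_le_right inf_le_right

lemma bandProjApp_le_of_le_isComponent (hv : IsComponent e v) (hgv : g ≤ v) :
    bandProjApp g e ≤ v := by
  refine ciSup_le fun m => ?_
  calc e ⊓ m • g ≤ (e - v) ⊓ m • v + v := by
        rw [inf_add, sub_add_cancel]
        exact inf_le_inf_left e
          ((nsmul_le_nsmul_right hgv m).trans (le_add_of_nonneg_right hv.1))
    _ = v := by rw [inf_nsmul_eq_zero hv.2.2, zero_add]

end BandProjection

section Skyscraper

/-- The part of the space swept out by the first `k` iterates of `p`: `⋁_{j < k} Sʲ p`. -/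
def sweep [Lattice E] [Zero E] (S : E → E) (p : E) (k : ℕ) : E :=
  partialSup (fun j => S^[j] p) k

/-- The `k`-th level of the Kakutani skyscraper over `p`, the part of `Sᵏ p` that is not covered by
`p, Sp, …, Sᵏ⁻¹ p`, encoded as a difference of consecutive sweeps. -/
def kakutaniLevel [Lattice E] [AddCommGroup E] (S : E → E) (p : E) (k : ℕ) : E :=
  sweep S p (k + 1) - sweep S p k

lemma sweep_mono [Lattice E] [Zero E] (S : E → E) (p : E) : Monotone (sweep S p) :=
  monotone_nat_of_le_succ fun _ => le_sup_left

lemma iterate_le_sweep [Lattice E] [Zero E] (S : E → E) (p : E) {i k : ℕ} (h : i < k) :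
    S^[i] p ≤ sweep S p k :=
  (le_sup_right : _ ≤ sweep S p (i + 1)).trans (sweep_mono S p h)

lemma sweep_succ_eq_sup_map [Lattice E] [AddZeroClass E] {S : E ≃+o E} {p : E} (hp : 0 ≤ p)
    (k : ℕ) : sweep S p (k + 1) = p ⊔ S (sweep S p k) := by
  induction k with
  | zero => simp [sweep, partialSup, hp]
  | succ k ih =>
    calc sweep S p (k + 2) = sweep S p (k + 1) ⊔ S^[k + 1] p := rfl
      _ = p ⊔ S (sweep S p k ⊔ S^[k] p) := by rw [ih, map_sup, sup_assoc, iterate_succ_apply']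

variable [Lattice E] [AddCommGroup E] [IsOrderedAddMonoid E] {S : E ≃+o E} {e p : E}

lemma isComponent_sweep (hSe : S e = e) (hp : IsComponent e p) (k : ℕ) :
    IsComponent e (sweep S p k) := by
  induction k with
  | zero =>
    have he : 0 ≤ e := hp.1.trans hp.2.1
    exact ⟨le_rfl, he, by simpa [sweep, partialSup] using he⟩
  | succ k ih => exact ih.sup (hp.iterate hSe k)

lemma isComponent_kakutaniLevel (hSe : S e = e) (hp : IsComponent e p) (k : ℕ) :
    IsComponent e (kakutaniLevel S p k) :=
  (isComponent_sweep hSe hp k).sub (isComponent_sweep hSe hp (k + 1)) (sweep_mono S p k.le_succ)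

lemma kakutaniLevel_le_iterate (hSe : S e = e) (hp : IsComponent e p) (k : ℕ) :
    kakutaniLevel S p k ≤ S^[k] p :=
  sub_le_iff_le_add'.2 <|
    sup_le_add_of_nonneg (isComponent_sweep hSe hp k).1 (hp.iterate hSe k).1

lemma kakutaniLevel_inf_sweep (hSe : S e = e) (hp : IsComponent e p) (k : ℕ) :
    kakutaniLevel S p k ⊓ sweep S p k = 0 :=
  have hsweep := isComponent_sweep hSe hp
  inf_eq_zero_of_le_of_le (isComponent_kakutaniLevel hSe hp k).1 (hsweep k).1
    (sub_le_sub_right (hsweep (k + 1)).2.1 _) le_rfl (hsweep k).2.2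

lemma kakutaniLevel_inf_kakutaniLevel (hSe : S e = e) (hp : IsComponent e p) {k l : ℕ}
    (hkl : k ≠ l) : kakutaniLevel S p k ⊓ kakutaniLevel S p l = 0 := by
  wlog hlt : l < k generalizing k l
  · rw [inf_comm]
    exact this hkl.symm (hkl.lt_of_le (not_lt.1 hlt))
  have hlevel := isComponent_kakutaniLevel hSe hp
  have hle : kakutaniLevel S p l ≤ sweep S p k :=
    (sub_le_self _ (isComponent_sweep hSe hp l).1).trans (sweep_mono S p hlt)
  exact inf_eq_zero_of_le_of_le (hlevel k).1 (hlevel l).1 le_rfl hle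
    (kakutaniLevel_inf_sweep hSe hp k)

lemma sweep_le_of_kakutaniLevel_le (hSe : S e = e) (hp : IsComponent e p) {w : E} (hw : 0 ≤ w)
    (h : ∀ k, kakutaniLevel S p k ≤ w) (k : ℕ) : sweep S p k ≤ w := by
  induction k with
  | zero => exact hw
  | succ k ih =>
    have hdecomp := sup_eq_add_of_inf_eq_zero (kakutaniLevel_inf_sweep hSe hp k)
    rw [kakutaniLevel, sub_add_cancel] at hdecomp
    exact hdecomp ▸ sup_le (h k) ih

lemma kakutaniLevel_succ_le_map (hp : 0 ≤ p) (k : ℕ) :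
    kakutaniLevel S p (k + 1) ≤ S (kakutaniLevel S p k) := by
  have hmono : S (sweep S p k) ≤ S (sweep S p (k + 1)) :=
    OrderHomClass.mono S (sweep_mono S p k.le_succ)
  calc kakutaniLevel S p (k + 1)
      = S (sweep S p (k + 1)) ⊔ p - S (sweep S p k) ⊔ p := by
        rw [kakutaniLevel, sweep_succ_eq_sup_map hp (k + 1), sweep_succ_eq_sup_map hp k,
          sup_comm p, sup_comm p]
    _ ≤ |S (sweep S p (k + 1)) - S (sweep S p k)| :=
        (le_abs_self _).trans (abs_sup_sub_sup_le_abs _ _ _)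
    _ = S (kakutaniLevel S p k) := by
        rw [abs_of_nonneg (sub_nonneg.2 hmono), kakutaniLevel, map_sub]

lemma map_kakutaniLevel_le (hSe : S e = e) (hp : IsComponent e p) (k : ℕ) :
    S (kakutaniLevel S p k) ≤ kakutaniLevel S p (k + 1) + p := by
  have hsweep := sweep_succ_eq_sup_map (S := S) hp.1
  have hsup : sweep S p (k + 1) ≤ p + S (sweep S p k) :=
    hsweep k ▸ sup_le_add_of_nonneg hp.1 ((isComponent_sweep hSe hp k).map S).1
  calc S (kakutaniLevel S p k) = S (sweep S p (k + 1)) - (p + S (sweep S p k)) + p := by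
        rw [kakutaniLevel, map_sub]; abel
    _ ≤ sweep S p (k + 2) - sweep S p (k + 1) + p := by
        gcongr
        exact hsweep (k + 1) ▸ le_sup_right

lemma symm_iterate_kakutaniLevel_le (hp : 0 ≤ p) (r m : ℕ) :
    S.symm^[r] (kakutaniLevel S p (m + r)) ≤ kakutaniLevel S p m := by
  induction r with
  | zero => exact le_rfl
  | succ r ih =>
    rw [iterate_succ_apply]
    refine ((OrderHomClass.mono S.symm).iterate r ?_).trans ih
    exact (OrderIsoClass.toOrderIso S).symm_apply_le.2 (kakutaniLevel_succ_le_map hp (m + r))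

lemma kakutaniLevel_le_symm_iterate (hSe : S e = e) (hp : IsComponent e p) (r m : ℕ) :
    kakutaniLevel S p m ≤
      S.symm^[r] (kakutaniLevel S p (m + r)) + ∑ j ∈ Finset.range r, S.symm^[j + 1] p := by
  induction r with
  | zero => simp
  | succ r ih =>
    have hpull : kakutaniLevel S p (m + r) ≤ S.symm (kakutaniLevel S p (m + r + 1) + p) :=
      (OrderIsoClass.toOrderIso S).le_symm_apply.2 (map_kakutaniLevel_le hSe hp (m + r))
    calc kakutaniLevel S p m
        ≤ S.symm^[r] (S.symm (kakutaniLevel S p (m + r + 1) + p)) +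
            ∑ j ∈ Finset.range r, S.symm^[j + 1] p := by
          refine ih.trans ?_
          gcongr
          exact (OrderHomClass.mono S.symm).iterate r hpull
      _ = S.symm^[r + 1] (kakutaniLevel S p (m + (r + 1))) +
            ∑ j ∈ Finset.range (r + 1), S.symm^[j + 1] p := by
          rw [map_add, iterate_map_add, Finset.sum_range_succ, iterate_succ_apply,
            iterate_succ_apply, add_assoc (S.symm^[r] _), add_comm (S.symm^[r] (S.symm p))]
          rfl

end Skyscraper

section RokhlinTower

lemma iterate_iterate_of_rightInverse {f g : E → E} (h : RightInverse g f) {i n : ℕ} (hi : i ≤ n)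
    (x : E) : f^[i] (g^[n] x) = g^[n - i] x := by
  obtain ⟨r, rfl⟩ := Nat.exists_eq_add_of_le hi
  rw [iterate_add_apply, Nat.add_sub_cancel_left]
  exact h.iterate i _

variable [ConditionallyCompleteLattice E] [AddCommGroup E]

/-- The base of a tower of height `n + 1`: the levels of the Kakutani skyscraper over `p` are
grouped into blocks of `n + 1`, and the top level of each block is pulled back `n` times. -/
def rokhlinBase (S : E ≃+o E) (p : E) (n : ℕ) : E :=
  ⨆ k : ℕ, S.symm^[n] (kakutaniLevel S p (k * (n + 1) + n))

variable [IsOrderedAddMonoid E] {S : E ≃+o E} {e p : E}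

lemma isComponent_symm_iterate_kakutaniLevel (hSe : S e = e) (hp : IsComponent e p) (n k : ℕ) :
    IsComponent e (S.symm^[n] (kakutaniLevel S p k)) :=
  (isComponent_kakutaniLevel hSe hp k).iterate (symm_apply_eq_self hSe) n

lemma isLUB_rokhlinBase (hSe : S e = e) (hp : IsComponent e p) (n : ℕ) :
    IsLUB (range fun k : ℕ => S.symm^[n] (kakutaniLevel S p (k * (n + 1) + n)))
      (rokhlinBase S p n) :=
  IsComponent.isLUB_iSup fun _ => isComponent_symm_iterate_kakutaniLevel hSe hp n _

lemma isComponent_rokhlinBase (hSe : S e = e) (hp : IsComponent e p) (n : ℕ) :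
    IsComponent e (rokhlinBase S p n) :=
  .of_isLUB (isLUB_rokhlinBase hSe hp n) fun _ =>
    isComponent_symm_iterate_kakutaniLevel hSe hp n _

lemma rokhlinBase_le_iSup_iterate (hSe : S e = e) (hp : IsComponent e p) (n : ℕ) :
    rokhlinBase S p n ≤ ⨆ k, S^[k] p :=
  ciSup_le fun k => (symm_iterate_kakutaniLevel_le hp.1 n _).trans <|
    (kakutaniLevel_le_iterate hSe hp _).trans <|
      (IsComponent.isLUB_iSup (hp.iterate hSe)).1 ⟨k * (n + 1), rfl⟩

lemma iterate_symm_iterate_kakutaniLevel_le (hp : 0 ≤ p) {i n : ℕ} (hi : i ≤ n) (m : ℕ) :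
    S^[i] (S.symm^[n] (kakutaniLevel S p (m + n))) ≤ kakutaniLevel S p (m + i) := by
  have h := symm_iterate_kakutaniLevel_le (S := S) hp (n - i) (m + i)
  rw [add_assoc, Nat.add_sub_cancel' hi] at h
  exact (iterate_iterate_of_rightInverse S.apply_symm_apply hi _).trans_le h

lemma iterate_rokhlinBase_inf_eq_zero (hSe : S e = e) (hp : IsComponent e p) {i j n : ℕ}
    (hi : i < n + 1) (hj : j < n + 1) (hij : i ≠ j) :
    S^[i] (rokhlinBase S p n) ⊓ S^[j] (rokhlinBase S p n) = 0 := by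
  have hlub := isLUB_range_iterate S (isLUB_rokhlinBase hSe hp n)
  have hcomp (i k : ℕ) :=
    (isComponent_symm_iterate_kakutaniLevel hSe hp n (k * (n + 1) + n)).iterate hSe i
  refine inf_eq_zero_of_isLUB (hlub j) fun l => ?_
  rw [inf_comm]
  refine inf_eq_zero_of_isLUB (hlub i) fun k => ?_
  have hne : l * (n + 1) + j ≠ k * (n + 1) + i := fun h => hij <| by
    simpa [Nat.mul_add_mod_self_right, Nat.mod_eq_of_lt hi, Nat.mod_eq_of_lt hj] using
      (congrArg (· % (n + 1)) h).symm
  exact inf_eq_zero_of_le_of_le (hcomp j l).1 (hcomp i k).1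
    (iterate_symm_iterate_kakutaniLevel_le hp.1 (Nat.lt_succ_iff.1 hj) _)
    (iterate_symm_iterate_kakutaniLevel_le hp.1 (Nat.lt_succ_iff.1 hi) _)
    (kakutaniLevel_inf_kakutaniLevel hSe hp hne)

lemma kakutaniLevel_le_sweep_rokhlinBase_add (hSe : S e = e) (hp : IsComponent e p) (n m : ℕ) :
    kakutaniLevel S p m ≤
      sweep S (rokhlinBase S p n) (n + 1) + ∑ j ∈ Finset.range n, S.symm^[j + 1] p := by
  obtain ⟨k, i, hi, rfl⟩ : ∃ k i, i ≤ n ∧ m = k * (n + 1) + i :=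
    ⟨m / (n + 1), m % (n + 1), Nat.lt_succ_iff.1 (m.mod_lt n.succ_pos), (Nat.div_add_mod' ..).symm⟩
  have hlevel := kakutaniLevel_le_symm_iterate hSe hp (n - i) (k * (n + 1) + i)
  rw [add_assoc, Nat.add_sub_cancel' hi,
    ← iterate_iterate_of_rightInverse S.apply_symm_apply hi] at hlevel
  refine hlevel.trans (add_le_add ?_ ?_)
  · refine le_trans ?_ (iterate_le_sweep S _ (Nat.lt_succ_iff.2 hi))
    exact (OrderHomClass.mono S).iterate i ((isLUB_rokhlinBase hSe hp n).1 ⟨k, rfl⟩)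
  · exact Finset.sum_le_sum_of_subset_of_nonneg (Finset.range_mono (n.sub_le i))
      fun j _ _ => (hp.iterate (symm_apply_eq_self hSe) (j + 1)).1

lemma iSup_iterate_le_sweep_rokhlinBase_add (hSe : S e = e) (hp : IsComponent e p) (n : ℕ) :
    ⨆ k, S^[k] p ≤
      sweep S (rokhlinBase S p n) (n + 1) + ∑ j ∈ Finset.range n, S.symm^[j + 1] p := by
  refine ciSup_le fun k => (iterate_le_sweep S p k.lt_succ_self).trans ?_
  have hbound := kakutaniLevel_le_sweep_rokhlinBase_add hSe hp n
  exact sweep_le_of_kakutaniLevel_le hSe hp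
    ((isComponent_kakutaniLevel hSe hp 0).1.trans (hbound 0)) hbound (k + 1)

end RokhlinTower

section ConditionalExpectation

variable [ConditionallyCompleteLattice E] [AddCommGroup E] {T : E →+ E} {S : E ≃+o E} {e p : E}

lemma map_iSup_iterate_eq_self (hT : StrictMono T) (hTS : ∀ f, T (S f) = T f) (hSe : S e = e)
    (hp : IsComponent e p) : S (⨆ k, S^[k] p) = ⨆ k, S^[k] p := by
  have hlub : IsLUB (range fun k => S^[k] p) (⨆ k, S^[k] p) :=
    IsComponent.isLUB_iSup (hp.iterate hSe)
  have hle : S (⨆ k, S^[k] p) ≤ ⨆ k, S^[k] p := by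
    refine (isLUB_range_map S hlub).2 (forall_mem_range.2 fun k => ?_)
    exact (iterate_succ_apply' S k p).symm.trans_le (hlub.1 ⟨k + 1, rfl⟩)
  exact hle.eq_of_not_lt fun hlt => (hT hlt).ne (hTS _)

variable [IsOrderedAddMonoid E]

lemma le_bandProjApp_map (hT : StrictMono T) (hTe : T e = e)
    (hTu : T (bandProjApp (T p) e) = bandProjApp (T p) e) (hp : 0 ≤ p) (hpe : p ≤ e) :
    p ≤ bandProjApp (T p) e := by
  set u := bandProjApp (T p) e
  have hu : 0 ≤ u := bandProjApp_nonneg _ (hp.trans hpe)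
  have hcompl : 0 ≤ e - u := sub_nonneg.2 (bandProjApp_le _ _)
  have hT₀ {x : E} (hx : 0 ≤ x) : 0 ≤ T x := map_zero T ▸ hT.monotone hx
  have hw : 0 ≤ (e - u) ⊓ p := le_inf hcompl hp
  have hTw : T ((e - u) ⊓ p) ≤ 0 := by
    rw [← sub_bandProjApp_inf_eq_zero (e := e) (hT₀ hp)]
    refine le_inf ?_ (hT.monotone inf_le_right)
    simpa [hTe, hTu] using hT.monotone (inf_le_left : (e - u) ⊓ p ≤ e - u)
  have hdisj : (e - u) ⊓ p = 0 := .symm <|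
    hw.eq_of_not_lt fun hlt => (map_zero T ▸ hT hlt).not_ge hTw
  have hadd : e - u + p ≤ e := sup_eq_add_of_inf_eq_zero hdisj ▸ sup_le (sub_le_self _ hu) hpe
  rwa [sub_add_eq_add_sub, sub_le_iff_le_add, add_le_add_iff_left] at hadd

lemma bandProjApp_map_eq_iSup_iterate (hT : StrictMono T) (hTT : ∀ f, T (T f) = T f)
    (hTS : ∀ f, T (S f) = T f) (hErg : {f | S f = f} = range T) (hTe : T e = e)
    (hp : IsComponent e p) : bandProjApp (T p) e = ⨆ k, S^[k] p := by
  have hTfix {f : E} (hf : S f = f) : T f = f := by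
    obtain ⟨g, rfl⟩ : f ∈ range T := hErg ▸ hf
    exact hTT g
  have hSfix {f : E} (hf : T f = f) : S f = f := hErg.ge ⟨f, hf⟩
  have hSe : S e = e := hSfix hTe
  apply le_antisymm
  · have hlub : IsLUB (range fun k => S^[k] p) (⨆ k, S^[k] p) :=
      IsComponent.isLUB_iSup (hp.iterate hSe)
    refine bandProjApp_le_of_le_isComponent (.of_isLUB hlub (hp.iterate hSe)) ?_
    rw [← hTfix (map_iSup_iterate_eq_self hT hTS hSe hp)]
    exact hT.monotone (hlub.1 ⟨0, rfl⟩)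
  · have hSu : S (bandProjApp (T p) e) = bandProjApp (T p) e := by
      rw [map_bandProjApp, hSfix (hTT p), hSe]
    refine ciSup_le fun k => ?_
    rw [← iterate_fixed hSu k]
    exact (OrderHomClass.mono S).iterate k
      (le_bandProjApp_map hT hTe (hTfix hSu) hp.1 hp.2.1)

theorem kakutani_rokhlin_free_general (hT : StrictMono T) (hTT : ∀ f, T (T f) = T f)
    (hTS : ∀ f, T (S f) = T f) (hErg : {f | S f = f} = range T) (hTe : T e = e)
    (hp : IsComponent e p) (n : ℕ) :
    ∃ q : E, IsComponent (bandProjApp (T p) e) q ∧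
      (∀ i j : ℕ, i < n + 1 → j < n + 1 → i ≠ j → S^[i] q ⊓ S^[j] q = 0) ∧
      (bandProjApp (T p) e - n • T p) ⊔ 0 ≤ T (partialSup (fun j => S^[j] q) (n + 1)) := by
  have hu := bandProjApp_map_eq_iSup_iterate hT hTT hTS hErg hTe hp
  have hSe : S e = e := hErg.ge ⟨e, hTe⟩
  have hTu : T (bandProjApp (T p) e) = bandProjApp (T p) e := by
    obtain ⟨f, hf⟩ : bandProjApp (T p) e ∈ range T :=
      hErg.le (hu ▸ map_iSup_iterate_eq_self hT hTS hSe hp)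
    rw [← hf, hTT]
  have hq := isComponent_rokhlinBase hSe hp n
  refine ⟨rokhlinBase S p n,
    hq.of_le_of_le (hu ▸ rokhlinBase_le_iSup_iterate hSe hp n) (bandProjApp_le _ _),
    fun i j hi hj hij => iterate_rokhlinBase_inf_eq_zero hSe hp hi hj hij, sup_le ?_ ?_⟩
  · have hTsymm (j : ℕ) : T (S.symm^[j] p) = T p :=
      congrFun (iterate_invariant (funext fun f => by simp [← hTS (S.symm f)]) j) p
    have hcover := hT.monotone (iSup_iterate_le_sweep_rokhlinBase_add hSe hp n)
    rw [← hu, hTu, map_add, map_sum] at hcover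
    simp only [hTsymm, Finset.sum_const, Finset.card_range] at hcover
    exact sub_le_iff_le_add.2 hcover
  · exact map_zero T ▸ hT.monotone (isComponent_sweep hSe hq (n + 1)).1

end ConditionalExpectation

section CEPS

variable [ConditionallyCompleteLattice E] [AddCommGroup E] [Module ℝ E] [IsOrderedAddMonoid E]
  {T S : E →ₗ[ℝ] E} {e : E}

lemma IsCEPS.strictMono (h : IsCEPS T S e) : StrictMono T :=
  (strictMono_iff_map_pos T).2 fun f hf =>
    (h.T_pos f hf.le).lt_of_ne fun hTf => hf.ne' (h.T_strictPos f hf.le hTf.symm)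

lemma IsCEPS.map_le_map_iff (h : IsCEPS T S e) {x y : E} : S x ≤ S y ↔ x ≤ y := by
  refine ⟨fun hxy => ?_, fun hxy => ?_⟩
  · have hT : T y = T (x ⊔ y) := by rw [← h.TS (x ⊔ y), h.S_hom, sup_eq_right.2 hxy, h.TS]
    have hsup : y = x ⊔ y := le_sup_right.eq_of_not_lt fun hlt => (h.strictMono hlt).ne hT
    exact hsup ▸ le_sup_left
  · rw [← sup_eq_right.2 hxy, h.S_hom]
    exact le_sup_left

/-- A surjective `S` in a conditional expectation preserving system, as an automorphism of the
lattice-ordered group `E`. -/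
def IsCEPS.orderAddAut (h : IsCEPS T S e) (hS : Surjective S) : E ≃+o E where
  __ := AddEquiv.ofBijective S ⟨fun _ _ hxy =>
    le_antisymm (h.map_le_map_iff.1 hxy.le) (h.map_le_map_iff.1 hxy.ge), hS⟩
  map_le_map_iff' := h.map_le_map_iff

end CEPS

/-- **Kakutani–Rokhlin lemma (ε-free version).** -/
theorem kakutani_rokhlin_free {E : Type*} [ConditionallyCompleteLattice E] [AddCommGroup E]
    [Module ℝ E] [CovariantClass E E (· + ·) (· ≤ ·)] [PosSMulMono ℝ E]
    (T S : E →ₗ[ℝ] E) (e : E) (hCEPS : IsCEPS T S e)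
    (hErg : {f : E | S f = f} = Set.range T)
    (hTuc : TUnivComplete T)
    (hS : Function.Surjective ⇑S)
    (n : ℕ) (hn : 1 ≤ n) (p : E) (hp : IsComponent e p) :
    ∃ q : E, IsComponent (bandProjApp (T p) e) q ∧
      (∀ i j : ℕ, i < n → j < n → i ≠ j → (⇑S)^[i] q ⊓ (⇑S)^[j] q = 0) ∧
      (bandProjApp (T p) e - (n - 1) • T p) ⊔ 0 ≤
        T (partialSup (fun j => (⇑S)^[j] q) n) := by
  have : IsOrderedAddMonoid E :=
    { add_le_add_left := fun _ _ h c => by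
        simpa only [add_comm _ c] using CovariantClass.elim (μ := (· + ·)) c h }
  obtain ⟨n, rfl⟩ := Nat.exists_eq_add_of_le' hn
  exact kakutani_rokhlin_free_general (T := T.toAddMonoidHom) (S := hCEPS.orderAddAut hS)
    hCEPS.strictMono hCEPS.T_proj hCEPS.TS hErg hCEPS.Te hp n
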